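/- Let G be a k-connected (k ≥ 1) finite simple graph with n ≥ 9 vertices, e edges, minimum degree δ, and maximum degree Δ. If F(G) ≤ (n − k − 2)·δ³ + (δ/(k + 2))·( 2(k + 2)·((k + 2)·δ² + e²/(n − k − 2)) − e² − 2(k + 2)·(n − k − 2)·Δ² ), then G is traceable. -/

import Mathlib

open Finset

/-- The first Zagreb index of a graph: the sum of the squares of the vertex degrees. -/
def zagreb1 {V : Type*} [Fintype V] (G : SimpleGraph V) [DecidableRel G.Adj] : ℝ :=
  ∑ u, (G.degree u : ℝ) ^ 2

/-- The forgotten topological index of a graph: the sum of the cubes of the vertex degrees. -/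
def forgottenIndex {V : Type*} [Fintype V] (G : SimpleGraph V) [DecidableRel G.Adj] : ℝ :=
  ∑ u, (G.degree u : ℝ) ^ 3

/-- The inverse degree of a graph: the sum of the reciprocals of the vertex degrees. -/
noncomputable def invDegree {V : Type*} [Fintype V] (G : SimpleGraph V) [DecidableRel G.Adj] : ℝ :=
  ∑ u, 1 / (G.degree u : ℝ)

/-- The independence number of a graph: the largest cardinality of a set of pairwise
nonadjacent vertices. -/
noncomputable def indepNum {V : Type*} [Fintype V] (G : SimpleGraph V) : ℕ :=
  sSup {k | ∃ s : Finset V, s.card = k ∧ ∀ u ∈ s, ∀ v ∈ s, ¬ G.Adj u v}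

/-- A graph is a regular balanced bipartite graph if its vertices can be partitioned into
two parts of equal size with every edge joining the two parts, and all vertices have the
same degree. -/
def IsRegularBalancedBipartite {V : Type*} [Fintype V] (G : SimpleGraph V) [DecidableRel G.Adj] : Prop :=
  ∃ (A : Finset V) (r : ℕ), 2 * A.card = Fintype.card V ∧
    (∀ u v, G.Adj u v → (u ∈ A ↔ v ∉ A)) ∧ G.IsRegularOfDegree r

/-- A graph is `k`-connected if it has more than `k` vertices and removing any set of
fewer than `k` vertices leaves a connected graph. -/
def IsKConnected {V : Type*} [Fintype V] (G : SimpleGraph V) (k : ℕ) : Prop :=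
  k < Fintype.card V ∧
    ∀ S : Finset V, S.card < k → (G.induce (↑S : Set V)ᶜ).Connected

/-- A graph is traceable if it has a Hamiltonian path. -/
def IsTraceable {V : Type*} [DecidableEq V] (G : SimpleGraph V) : Prop :=
  ∃ (u v : V) (p : G.Walk u v), p.IsHamiltonian

/-!
Suppose `G` is not traceable, let `P` be a longest path with first vertex `v`, and let `h` be a
vertex off `P`. By `k`-connectivity the component of `h` in `G - P` has at least `k` neighbours on
`P`, and, as in the theorem of Chvátal and Erdős, the successors of these neighbours form together
with `v` and `h` an independent set; so some independent set `S` of size `s = k + 2` contains `v`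
and `h`.

Let `m = n - s`. Since `s * δ ≤ ∑ u ∈ S, d u ≤ e ≤ ∑ u ∈ Sᶜ, d u ≤ m * Δ`, the right-hand side of
the hypothesis is at most `n * δ ^ 3 ≤ F(G)`. So equality holds throughout: `G` is `δ`-regular and
bipartite with sides `S` and `Sᶜ`, which are therefore of equal size. A connected graph has only
one bipartition, so every vertex off `P` lies in the same side `S` as `v`. Hence `P` passes
through all of `Sᶜ`, and each vertex of `Sᶜ` is preceded on `P` by a vertex of `S` other than `h`,
whence `|Sᶜ| < |S|`, a contradiction.
-/

section PairInfix

variable {α : Type*} {l : List α} {x x' y y' v : α}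

theorem eq_of_pair_infix_of_pair_infix_right (hl : l.Nodup) (h : [x, y] <:+: l)
    (h' : [x', y] <:+: l) : x = x' := by
  obtain ⟨A, B, rfl⟩ := h
  obtain ⟨A', B', h'⟩ := h'
  have hsplit : (A' ++ [x']) ++ y :: B' = (A ++ [x]) ++ y :: B := by simpa using h'
  have hy : y ∉ A' ++ [x'] ∧ y ∉ B' := by
    have hl' : ((A' ++ [x']) ++ y :: B').Nodup := by rw [hsplit]; simpa using hl
    simpa [and_assoc] using (List.nodup_middle.1 hl').notMem
  have hprefix : A' ++ [x'] = A ++ [x] := ((List.append_cons_inj_of_notMem hy.1 hy.2).1 hsplit).1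
  simpa using (List.append_inj' hprefix rfl).2.symm

theorem eq_of_pair_infix_of_pair_infix_left (hl : l.Nodup) (h : [x, y] <:+: l)
    (h' : [x, y'] <:+: l) : y = y' :=
  eq_of_pair_infix_of_pair_infix_right (List.nodup_reverse.2 hl)
    (by simpa using List.reverse_infix.2 h) (by simpa using List.reverse_infix.2 h')

theorem not_pair_infix_cons_of_nodup (hl : (v :: l).Nodup) : ¬ [x, v] <:+: v :: l := by
  rintro ⟨A, B, h⟩
  cases A with
  | nil =>
    obtain ⟨rfl, rfl⟩ : x = v ∧ v :: B = l := by simpa using h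
    simp at hl
  | cons a A =>
    obtain ⟨rfl, rfl⟩ : a = v ∧ A ++ [x, v] ++ B = l := by simpa using h
    simp at hl

theorem exists_pair_infix_cons (hy : y ∈ l) : ∃ x, [x, y] <:+: v :: l := by
  obtain ⟨A, B, rfl⟩ := List.mem_iff_append.1 hy
  obtain ⟨C, x, hC⟩ := List.eq_nil_or_concat (v :: A) |>.resolve_left (List.cons_ne_nil v A)
  exact ⟨x, C, B, by simp [← List.cons_append, hC]⟩

end PairInfix

section Connectivity

variable {V : Type*} {G : SimpleGraph V}

theorem IsKConnected.connected [Fintype V] {k : ℕ} (hG : IsKConnected G k) (hk : 1 ≤ k) :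
    G.Connected := by
  have := hG.2 ∅ (by rw [card_empty]; omega)
  rw [coe_empty, Set.compl_empty] at this
  exact (SimpleGraph.induceUnivIso G).connected_iff.1 this

theorem IsKConnected.le_card_of_separates [Fintype V] {k : ℕ} (hG : IsKConnected G k) {H : Set V}
    {B : Finset V} (hB : ∀ a ∈ H, ∀ x ∉ H, G.Adj a x → x ∈ B) {u v : V} (huH : u ∈ H) (huB : u ∉ B)
    (hvH : v ∉ H) (hvB : v ∉ B) : k ≤ #B := by
  by_contra! hlt
  obtain ⟨p⟩ := (hG.2 B hlt).preconnected ⟨u, by simpa using huB⟩ ⟨v, by simpa using hvB⟩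
  obtain ⟨d, -, hfst, hsnd⟩ := p.exists_boundary_dart (Subtype.val ⁻¹' H) huH hvH
  exact d.snd.2 (hB _ hfst _ hsnd d.adj)

theorem eq_of_isBipartiteWith_compl (hG : G.Preconnected) {S T : Set V}
    (hS : G.IsBipartiteWith S Sᶜ) (hT : G.IsBipartiteWith T Tᶜ) {v : V} (hvS : v ∈ S)
    (hvT : v ∈ T) : S = T := by
  ext x
  by_contra hx
  obtain ⟨p⟩ := hG v x
  obtain ⟨d, -, hfst, hsnd⟩ :=
    p.exists_boundary_dart {y | y ∈ S ↔ y ∈ T} (iff_of_true hvS hvT) hx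
  have hdS := hS.mem_of_adj d.adj
  have hdT := hT.mem_of_adj d.adj
  simp only [Set.mem_ofPred_eq, Set.mem_compl_iff] at hfst hsnd hdS hdT
  tauto

end Connectivity

section LongestPath

variable {V : Type*} {G : SimpleGraph V}

/-- The list `P` is the vertex list of a path of `G`, and no path of `G` has more vertices. Paths
are represented by lists because the rerouting arguments cut them up and reassemble them; the
empty list counts as a path. -/
structure IsLongestPath (G : SimpleGraph V) (P : List V) : Prop where
  isChain : P.IsChain G.Adj
  nodup : P.Nodup
  length_le : ∀ l : List V, l.IsChain G.Adj → l.Nodup → l.length ≤ P.length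

theorem exists_isLongestPath_cons [Finite V] [Nonempty V] (G : SimpleGraph V) :
    ∃ v l, IsLongestPath G (v :: l) := by
  obtain ⟨u, v, p, hp, hmax⟩ := SimpleGraph.Walk.exists_isPath_forall_isPath_length_le_length G
  refine ⟨u, p.support.tail, ?_⟩
  rw [p.cons_tail_support]
  refine ⟨p.isChain_adj_support, hp.support_nodup, fun l hl hnd => ?_⟩
  rcases eq_or_ne l [] with rfl | hne
  · simp
  · have := hmax _ _ (.ofSupport l hne hl) (.mk' (by rwa [SimpleGraph.Walk.support_ofSupport]))
    rw [← SimpleGraph.Walk.support_ofSupport hne hl]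
    simpa using this

theorem isTraceable_of_isChain_of_nodup [DecidableEq V] {P : List V} (hP : P.IsChain G.Adj)
    (hnd : P.Nodup) (hne : P ≠ []) (hmem : ∀ x, x ∈ P) : IsTraceable G :=
  ⟨_, _, .ofSupport P hne hP, fun x => by
    rw [SimpleGraph.Walk.support_ofSupport]
    exact List.count_eq_one_of_mem hnd (hmem x)⟩

/-- The vertices `a` and `b` lie in the same component of the graph obtained from `G` by deleting
the vertices of the list `P`; in particular neither of them is in `P`. -/
def JoinedOff (G : SimpleGraph V) (P : List V) (a b : V) : Prop :=
  ∃ p : G.Walk a b, ∀ x ∈ p.support, x ∉ P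

variable {P : List V} {a b c h : V}

theorem JoinedOff.refl (ha : a ∉ P) : JoinedOff G P a a :=
  ⟨.nil, by simpa using ha⟩

theorem JoinedOff.symm : JoinedOff G P a b → JoinedOff G P b a :=
  fun ⟨p, hp⟩ => ⟨p.reverse, by simpa using hp⟩

theorem JoinedOff.trans : JoinedOff G P a b → JoinedOff G P b c → JoinedOff G P a c :=
  fun ⟨p, hp⟩ ⟨q, hq⟩ => ⟨p.append q, fun x hx =>
    ((SimpleGraph.Walk.mem_support_append_iff p q).1 hx).elim (hp x) (hq x)⟩

theorem JoinedOff.right_notMem : JoinedOff G P a b → b ∉ P :=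
  fun ⟨p, hp⟩ => hp b p.end_mem_support

theorem JoinedOff.trans_adj (hab : JoinedOff G P a b) (hbc : G.Adj b c) (hc : c ∉ P) :
    JoinedOff G P a c :=
  hab.trans ⟨hbc.toWalk, by simpa [hc] using hab.right_notMem⟩

theorem JoinedOff.exists_isPath (hab : JoinedOff G P a b) :
    ∃ p : G.Walk a b, p.IsPath ∧ ∀ x ∈ p.support, x ∉ P := by
  classical
  obtain ⟨p, hp⟩ := hab
  exact ⟨p.bypass, p.bypass_isPath, fun x hx => hp x (p.support_bypass_subset_support hx)⟩

/-- The vertex `x` has a neighbour in the component of `h` in `G - P`. -/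
def IsAttached (G : SimpleGraph V) (P : List V) (h x : V) : Prop :=
  ∃ a, JoinedOff G P h a ∧ G.Adj a x

theorem exists_joinedOff_forall_adj (hh : h ∉ P) {o : Option V}
    (ho : ∀ x ∈ o, IsAttached G P h x) : ∃ a, JoinedOff G P h a ∧ ∀ x ∈ o, G.Adj a x := by
  cases o with
  | none => exact ⟨h, .refl hh, by simp⟩
  | some x => simpa [IsAttached] using ho x rfl

-- Otherwise a path through the component of `h` would join `A` to `C`, giving a longer path.
theorem IsLongestPath.mem_of_perm_of_isAttached {A B C : List V} (hP : IsLongestPath G (A ++ B))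
    (hCB : C.Perm B) (hC : C.IsChain G.Adj)
    (hA : ∀ x ∈ A.getLast?, IsAttached G (A ++ B) h x)
    (hC' : ∀ y ∈ C.head?, IsAttached G (A ++ B) h y) : h ∈ A ++ B := by
  by_contra hh
  obtain ⟨a, hha, ha⟩ := exists_joinedOff_forall_adj hh hA
  obtain ⟨b, hhb, hb⟩ := exists_joinedOff_forall_adj hh hC'
  obtain ⟨q, hq, hqP⟩ := (hha.symm.trans hhb).exists_isPath
  have hchain : (A ++ (q.support ++ C)).IsChain G.Adj := by
    refine (List.isChain_append.1 hP.isChain).1.append (q.isChain_adj_support.append hC ?_) ?_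
    · simpa [List.getLast?_eq_some_getLast q.support_ne_nil] using hb
    · simpa [List.head?_eq_some_head q.support_ne_nil] using fun x hx => (ha x hx).symm
  have hperm : (A ++ (q.support ++ C)).Perm (q.support ++ (A ++ B)) := by
    rw [← List.append_assoc, ← List.append_assoc]
    exact List.perm_append_comm.append hCB
  have hnodup : (A ++ (q.support ++ C)).Nodup :=
    hperm.nodup_iff.2 (hq.support_nodup.append hP.nodup hqP)
  have hlen := hP.length_le _ hchain hnodup
  rw [hperm.length_eq, List.length_append, SimpleGraph.Walk.length_support] at hlen
  omega

/-- The vertex `y` of `P` is the first one, or its predecessor on `P` has a neighbour in the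
component of `h` in `G - P`: the positions at which a path coming from that component could enter
`P`. -/
def IsEntry (G : SimpleGraph V) (P : List V) (h y : V) : Prop :=
  ∃ A B, P = A ++ y :: B ∧ ∀ x ∈ A.getLast?, IsAttached G P h x

theorem isEntry_head (G : SimpleGraph V) (v : V) (l : List V) (h : V) : IsEntry G (v :: l) h v :=
  ⟨[], l, rfl, by simp⟩

theorem IsEntry.mem {y : V} : IsEntry G P h y → y ∈ P := by
  rintro ⟨A, B, rfl, -⟩
  simp

theorem IsLongestPath.not_isAttached_of_isEntry (hP : IsLongestPath G P) (hh : h ∉ P) {y : V}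
    (hy : IsEntry G P h y) : ¬ IsAttached G P h y := by
  obtain ⟨A, B, rfl, hA⟩ := hy
  exact fun hy => hh <| hP.mem_of_perm_of_isAttached (.refl _)
    (List.isChain_append.1 hP.isChain).2.1 hA (by simpa using hy)

theorem IsLongestPath.exists_pair_infix_isEntry (hP : IsLongestPath G P) (hh : h ∉ P) {x : V}
    (hxP : x ∈ P) (hx : IsAttached G P h x) : ∃ y, IsEntry G P h y ∧ [x, y] <:+: P := by
  obtain ⟨A, B, rfl⟩ := List.mem_iff_append.1 hxP
  rw [List.append_cons] at *
  cases B with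
  | nil =>
    exact absurd (hP.mem_of_perm_of_isAttached (.refl _) .nil (by simpa using hx) (by simp)) hh
  | cons y B => exact ⟨y, ⟨A ++ [x], B, rfl, by simpa using hx⟩, A, B, by simp⟩

-- Otherwise enter the component of `h` after `A`, leave it to the end of `y :: B`, traverse
-- `y :: B` backwards and continue from `y` to `z`.
theorem IsLongestPath.not_adj_of_isAttached {A B C : List V} {y z : V}
    (hP : IsLongestPath G (A ++ (y :: B ++ z :: C))) (hh : h ∉ A ++ (y :: B ++ z :: C))
    (hA : ∀ x ∈ A.getLast?, IsAttached G (A ++ (y :: B ++ z :: C)) h x)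
    (hB : ∀ x ∈ (y :: B).getLast?, IsAttached G (A ++ (y :: B ++ z :: C)) h x) :
    ¬ G.Adj y z := by
  intro hyz
  obtain ⟨-, hchain, -⟩ := List.isChain_append.1 hP.isChain
  obtain ⟨hchain_yB, hchain_zC, -⟩ := List.isChain_append.1 hchain
  have hreverse : (y :: B).reverse.IsChain G.Adj :=
    List.isChain_reverse.2 (hchain_yB.imp fun _ _ => SimpleGraph.Adj.symm)
  refine hh (hP.mem_of_perm_of_isAttached (C := (y :: B).reverse ++ z :: C)
    ((y :: B).reverse_perm.append_right _) (hreverse.append hchain_zC ?_) hA ?_)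
  · simpa using hyz
  · rw [List.head?_append_of_ne_nil _ (by simp), List.head?_reverse]
    exact hB

theorem IsLongestPath.pairwise_not_adj_isEntry (hP : IsLongestPath G P) (hh : h ∉ P) :
    {y | IsEntry G P h y}.Pairwise fun y z => ¬ G.Adj y z := by
  rintro y ⟨A, B, rfl, hA⟩ z ⟨A', C, hsplit, hA'⟩ hyz
  rcases List.append_eq_append_iff.1 hsplit with ⟨M, rfl, hM⟩ | ⟨M, rfl, hM⟩ <;>
    cases M with
    | nil => simp_all
    | cons w M => ?_
  · obtain ⟨rfl, rfl⟩ : y = w ∧ B = M ++ z :: C := by simpa using hM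
    exact hP.not_adj_of_isAttached hh hA (by simpa using hA')
  · obtain ⟨rfl, rfl⟩ : z = w ∧ C = M ++ y :: B := by simpa using hM
    rw [List.append_assoc] at *
    exact fun hyz => hP.not_adj_of_isAttached hh hA' (by simpa using hA) hyz.symm

end LongestPath

section ChvatalErdos

variable {V : Type*} [Fintype V] {G : SimpleGraph V} {k : ℕ} {v h : V} {l : List V}

open Classical in
theorem IsLongestPath.le_card_isAttached (hP : IsLongestPath G (v :: l)) (hG : IsKConnected G k)
    (hh : h ∉ v :: l) : k ≤ #{x | x ∈ v :: l ∧ IsAttached G (v :: l) h x} := by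
  have hv : ¬ IsAttached G (v :: l) h v :=
    hP.not_isAttached_of_isEntry hh (isEntry_head G v l h)
  refine hG.le_card_of_separates (H := {a | JoinedOff G (v :: l) h a}) (u := h) (v := v) ?_
    (.refl hh) (fun hmem => hh (mem_filter.1 hmem).2.1)
    (fun hv => hv.right_notMem List.mem_cons_self) (by simp [hv])
  intro a ha x hx hax
  have hxP : x ∈ v :: l := by
    by_contra hxP
    exact hx (ha.trans_adj hax hxP)
  exact mem_filter.2 ⟨mem_univ x, hxP, a, ha, hax⟩

open Classical in
theorem IsLongestPath.card_isAttached_lt_card_isEntry (hP : IsLongestPath G (v :: l))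
    (hh : h ∉ v :: l) : #{x | x ∈ v :: l ∧ IsAttached G (v :: l) h x} <
      #{y | IsEntry G (v :: l) h y} := by
  have hv : v ∈ ({y | IsEntry G (v :: l) h y} : Finset V) :=
    mem_filter.2 ⟨mem_univ v, isEntry_head G v l h⟩
  refine lt_of_le_of_lt ?_ (card_erase_lt_of_mem hv)
  refine card_le_card_of_forall_subsingleton (fun x y => [x, y] <:+: v :: l) (fun x hx => ?_)
    fun y _ x hx x' hx' => eq_of_pair_infix_of_pair_infix_right hP.nodup hx.2 hx'.2
  obtain ⟨-, hxP, hx⟩ := mem_filter.1 hx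
  obtain ⟨y, hy, hxy⟩ := hP.exists_pair_infix_isEntry hh hxP hx
  refine ⟨y, mem_erase.2 ⟨?_, mem_filter.2 ⟨mem_univ y, hy⟩⟩, hxy⟩
  rintro rfl
  exact not_pair_infix_cons_of_nodup hP.nodup hxy

theorem IsLongestPath.exists_isIndepSet (hP : IsLongestPath G (v :: l)) (hG : IsKConnected G k)
    (hh : h ∉ v :: l) : ∃ S : Finset V, #S = k + 2 ∧ v ∈ S ∧ h ∈ S ∧ G.IsIndepSet S := by
  classical
  let E : Finset V := {y | IsEntry G (v :: l) h y}
  have hvE : v ∈ E := mem_filter.2 ⟨mem_univ v, isEntry_head G v l h⟩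
  have hhE : h ∉ E := fun hhE => hh (mem_filter.1 hhE).2.mem
  have hindep : G.IsIndepSet (insert h E : Finset V) := by
    have : Std.Symm fun x y => ¬ G.Adj x y := ⟨fun _ _ => mt SimpleGraph.Adj.symm⟩
    rw [SimpleGraph.isIndepSet_iff, coe_insert, Set.pairwise_insert_of_symm]
    refine ⟨by simpa [E] using hP.pairwise_not_adj_isEntry hh, fun y hy _ hhy => ?_⟩
    exact hP.not_isAttached_of_isEntry hh (mem_filter.1 hy).2 ⟨h, .refl hh, hhy⟩
  have hcard : k + 2 ≤ #(insert h E) := by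
    have hkE : k < #E :=
      (hP.le_card_isAttached hG hh).trans_lt (hP.card_isAttached_lt_card_isEntry hh)
    rw [card_insert_of_notMem hhE]
    omega
  obtain ⟨S, hvhS, hSE, hS⟩ := exists_subsuperset_card_eq (s := {v, h})
    (by simp [insert_subset_iff, hvE]) (card_le_two.trans (by omega)) hcard
  exact ⟨S, hS, hvhS (by simp), hvhS (by simp), hindep.mono (by exact_mod_cast hSE)⟩

end ChvatalErdos

theorem card_compl_le_card_of_isBipartiteWith {V : Type*} [Fintype V] [DecidableEq V]
    {G : SimpleGraph V} {S : Finset V} (hS : G.IsBipartiteWith S ↑Sᶜ) {v : V} {l : List V}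
    (hchain : (v :: l).IsChain G.Adj) (hnodup : (v :: l).Nodup) (hv : v ∈ S)
    (hmem : ∀ y ∉ S, y ∈ v :: l) : #Sᶜ ≤ #{x ∈ S | x ∈ v :: l} := by
  refine card_le_card_of_forall_subsingleton (fun y x => [x, y] <:+: v :: l) (fun y hy => ?_)
    fun x _ y hy y' hy' => eq_of_pair_infix_of_pair_infix_left hnodup hy.2 hy'.2
  have hyS : y ∉ S := mem_compl.1 hy
  have hyv : y ≠ v := fun hyv => hyS (hyv ▸ hv)
  obtain ⟨x, hxy⟩ := exists_pair_infix_cons (v := v)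
    ((List.mem_cons.1 (hmem y hyS)).resolve_left hyv)
  have hadj : G.Adj x y := List.isChain_pair.1 (hchain.infix hxy)
  refine ⟨x, mem_filter.2 ⟨hS.mem_of_mem_adj' (mem_coe.2 hy) hadj, ?_⟩, hxy⟩
  exact hxy.subset (by simp)

section Degrees

variable {V : Type*} [Fintype V] {G : SimpleGraph V} [DecidableRel G.Adj]

theorem card_mul_minDegree_pow_le_forgottenIndex (G : SimpleGraph V) [DecidableRel G.Adj] :
    Fintype.card V * (G.minDegree : ℝ) ^ 3 ≤ forgottenIndex G := by
  rw [← nsmul_eq_mul, ← card_univ]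
  exact card_nsmul_le_sum univ _ _ fun u _ => by
    gcongr
    exact G.minDegree_le_degree u

theorem isRegularOfDegree_minDegree_of_forgottenIndex_le
    (h : forgottenIndex G ≤ Fintype.card V * (G.minDegree : ℝ) ^ 3) :
    G.IsRegularOfDegree G.minDegree := by
  have hle : ∀ u ∈ univ, (G.minDegree : ℝ) ^ 3 ≤ (G.degree u : ℝ) ^ 3 := fun u _ => by
    gcongr
    exact G.minDegree_le_degree u
  rw [← nsmul_eq_mul, ← card_univ, ← sum_const, forgottenIndex] at h
  have heq := (sum_eq_sum_iff_of_le hle).1 ((sum_le_sum hle).antisymm h)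
  exact fun u => Nat.pow_left_injective three_ne_zero (mod_cast (heq u (mem_univ u)).symm)

theorem card_mul_minDegree_le_sum_degree (S : Finset V) :
    #S * G.minDegree ≤ ∑ u ∈ S, G.degree u :=
  card_nsmul_le_sum S _ _ fun u _ => G.minDegree_le_degree u

theorem card_eq_of_isBipartiteWith_of_isRegularOfDegree {S T : Finset V} {d : ℕ}
    (hST : G.IsBipartiteWith S T) (hreg : G.IsRegularOfDegree d) (hd : 0 < d) : #S = #T := by
  have := SimpleGraph.isBipartiteWith_sum_degrees_eq hST
  simp only [hreg.degree_eq, sum_const, smul_eq_mul] at this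
  exact Nat.eq_of_mul_eq_mul_right hd this

variable {S : Finset V}

theorem card_biUnion_incidenceFinset_of_isIndepSet [DecidableEq V] (hS : G.IsIndepSet S) :
    #(S.biUnion fun u => G.incidenceFinset u) = ∑ u ∈ S, G.degree u := by
  rw [card_biUnion]
  · simp only [SimpleGraph.card_incidenceFinset_eq_degree]
  · intro u hu w hw huw
    rw [Function.onFun, ← disjoint_coe, SimpleGraph.coe_incidenceFinset,
      SimpleGraph.coe_incidenceFinset, Set.disjoint_iff_inter_eq_empty]
    exact G.incidenceSet_inter_incidenceSet_of_not_adj (hS hu hw huw) huw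

theorem biUnion_incidenceFinset_subset_edgeFinset [DecidableEq V] (S : Finset V) :
    (S.biUnion fun u => G.incidenceFinset u) ⊆ G.edgeFinset :=
  biUnion_subset.2 fun u _ => G.incidenceFinset_subset u

theorem sum_degree_le_card_edgeFinset_of_isIndepSet (hS : G.IsIndepSet S) :
    ∑ u ∈ S, G.degree u ≤ #G.edgeFinset := by
  classical
  rw [← card_biUnion_incidenceFinset_of_isIndepSet hS]
  exact card_le_card (biUnion_incidenceFinset_subset_edgeFinset S)

variable [DecidableEq V]

theorem card_edgeFinset_le_card_compl_mul_maxDegree_of_isIndepSet (hS : G.IsIndepSet S) :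
    #G.edgeFinset ≤ #Sᶜ * G.maxDegree := by
  have hcompl : ∑ u ∈ Sᶜ, G.degree u ≤ #Sᶜ * G.maxDegree :=
    sum_le_card_nsmul Sᶜ _ _ fun u _ => G.degree_le_maxDegree u
  have hsum := sum_add_sum_compl S fun u => G.degree u
  have hle := sum_degree_le_card_edgeFinset_of_isIndepSet hS
  rw [G.sum_degrees_eq_twice_card_edges] at hsum
  omega

theorem isBipartiteWith_compl_of_card_edgeFinset_le (hS : G.IsIndepSet S)
    (hle : #G.edgeFinset ≤ ∑ u ∈ S, G.degree u) : G.IsBipartiteWith S ↑Sᶜ := by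
  rw [← card_biUnion_incidenceFinset_of_isIndepSet hS] at hle
  have hcover := eq_of_subset_of_card_le (biUnion_incidenceFinset_subset_edgeFinset S) hle
  refine ⟨disjoint_coe.2 disjoint_compl_right, fun x y hxy => ?_⟩
  have hmem : x ∈ S ∨ y ∈ S := by
    have : s(x, y) ∈ S.biUnion fun u => G.incidenceFinset u := by
      rw [hcover]
      simpa using hxy
    obtain ⟨u, hu, hinc⟩ := mem_biUnion.1 this
    rw [SimpleGraph.mem_incidenceFinset, SimpleGraph.mk'_mem_incidenceSet_iff] at hinc
    rcases hinc.2 with rfl | rfl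
    exacts [.inl hu, .inr hu]
  have hnot : ¬ (x ∈ S ∧ y ∈ S) := fun ⟨hx, hy⟩ => hS hx hy hxy.ne hxy
  simp only [mem_coe, mem_compl]
  tauto

end Degrees

section ForgottenBound

/-- The upper bound imposed on the forgotten index, for a graph with `s + m` vertices, `e` edges,
minimum degree `d` and maximum degree `D`; the theorem is about `s = k + 2`. -/
noncomputable def forgottenBound (s m e d D : ℝ) : ℝ :=
  m * d ^ 3 + d / s * (2 * s * (s * d ^ 2 + e ^ 2 / m) - e ^ 2 - 2 * s * m * D ^ 2)

theorem forgottenBound_add_le {s m e d D : ℝ} (hs : 0 < s) (hm : 0 < m) (hd : 0 ≤ d) (he : 0 ≤ e)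
    (heD : e ≤ m * D) :
    forgottenBound s m e d D + d / s * (e ^ 2 - (s * d) ^ 2) ≤ (s + m) * d ^ 3 := by
  have heD' : e ^ 2 / m ≤ m * D ^ 2 := by
    rw [div_le_iff₀ hm]
    calc e ^ 2 ≤ (m * D) ^ 2 := pow_le_pow_left₀ he heD 2
      _ = m * D ^ 2 * m := by ring
  calc forgottenBound s m e d D + d / s * (e ^ 2 - (s * d) ^ 2)
      = (s + m) * d ^ 3 + 2 * d * (e ^ 2 / m - m * D ^ 2) := by
        rw [forgottenBound]
        field_simp
        ring
    _ ≤ (s + m) * d ^ 3 :=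
        add_le_of_nonpos_right (mul_nonpos_of_nonneg_of_nonpos (by positivity) (by linarith))

variable {V : Type*} [Fintype V] [DecidableEq V] {G : SimpleGraph V} [DecidableRel G.Adj]
  {S : Finset V}

theorem isRegularOfDegree_and_isBipartiteWith_of_forgottenIndex_le (hS : G.IsIndepSet S)
    (hne : S.Nonempty) (hδ : 0 < G.minDegree)
    (hF : forgottenIndex G ≤ forgottenBound #S #Sᶜ #G.edgeFinset G.minDegree G.maxDegree) :
    G.IsRegularOfDegree G.minDegree ∧ G.IsBipartiteWith S ↑Sᶜ := by
  have hsδ := card_mul_minDegree_le_sum_degree (G := G) S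
  have hsum := sum_degree_le_card_edgeFinset_of_isIndepSet hS
  have hmΔ := card_edgeFinset_le_card_compl_mul_maxDegree_of_isIndepSet hS
  have hs : 0 < #S := hne.card_pos
  have hm : 0 < #Sᶜ :=
    Nat.pos_of_mul_pos_right <| (Nat.mul_pos hs hδ).trans_le (hsδ.trans (hsum.trans hmΔ))
  have hbound : forgottenIndex G +
      G.minDegree / #S * ((#G.edgeFinset : ℝ) ^ 2 - (#S * G.minDegree) ^ 2) ≤
        Fintype.card V * (G.minDegree : ℝ) ^ 3 := by
    rw [← card_add_card_compl S, Nat.cast_add]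
    exact (add_le_add_left hF _).trans <| forgottenBound_add_le (by positivity) (by positivity)
      (by positivity) (by positivity) (mod_cast hmΔ)
  have hcoef : (0 : ℝ) < G.minDegree / #S := by positivity
  have hreg : G.IsRegularOfDegree G.minDegree := by
    refine isRegularOfDegree_minDegree_of_forgottenIndex_le (le_of_add_le_of_nonneg_left hbound ?_)
    exact mul_nonneg hcoef.le (sub_nonneg.2 (by gcongr; exact_mod_cast hsδ.trans hsum))
  refine ⟨hreg, isBipartiteWith_compl_of_card_edgeFinset_le hS (le_trans ?_ hsδ)⟩
  have hsq : (#G.edgeFinset : ℝ) ^ 2 ≤ (#S * G.minDegree) ^ 2 := by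
    refine sub_nonpos.1 (nonpos_of_mul_nonpos_right ?_ hcoef)
    linarith [card_mul_minDegree_pow_le_forgottenIndex G]
  exact_mod_cast le_of_sq_le_sq hsq (by positivity)

end ForgottenBound

theorem IsLongestPath.exists_isRegularOfDegree_and_isBipartiteWith {V : Type*} [Fintype V]
    [DecidableEq V] {G : SimpleGraph V} [DecidableRel G.Adj] {k : ℕ} {v x : V} {l : List V}
    (hP : IsLongestPath G (v :: l)) (hG : IsKConnected G k) (hδ : 0 < G.minDegree)
    (hF : forgottenIndex G ≤ forgottenBound (k + 2) (Fintype.card V - k - 2) #G.edgeFinset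
      G.minDegree G.maxDegree) (hx : x ∉ v :: l) :
    ∃ S : Finset V, v ∈ S ∧ x ∈ S ∧ G.IsRegularOfDegree G.minDegree ∧ G.IsBipartiteWith S ↑Sᶜ := by
  obtain ⟨S, hS, hvS, hxS, hindep⟩ := hP.exists_isIndepSet hG hx
  have hs : (k : ℝ) + 2 = #S := by simp [hS]
  have hm : (Fintype.card V : ℝ) - k - 2 = #Sᶜ := by
    rw [sub_sub, hs, ← card_add_card_compl S, Nat.cast_add, add_sub_cancel_left]
  rw [hs, hm] at hF
  exact ⟨S, hvS, hxS,
    isRegularOfDegree_and_isBipartiteWith_of_forgottenIndex_le hindep ⟨v, hvS⟩ hδ hF⟩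

theorem stmt13_general {V : Type*} [Fintype V] [DecidableEq V] (G : SimpleGraph V)
    [DecidableRel G.Adj] (k : ℕ) (hk : 1 ≤ k) (hconn : IsKConnected G k)
    (h : forgottenIndex G ≤ forgottenBound (k + 2) (Fintype.card V - k - 2) #G.edgeFinset
      G.minDegree G.maxDegree) :
    IsTraceable G := by
  have hG := hconn.connected hk
  have : Nontrivial V := Fintype.one_lt_card_iff_nontrivial.1 (hk.trans_lt hconn.1)
  have hδ : 0 < G.minDegree := hG.preconnected.minDegree_pos_of_nontrivial
  obtain ⟨v, l, hP⟩ := exists_isLongestPath_cons G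
  refine isTraceable_of_isChain_of_nodup hP.isChain hP.nodup (List.cons_ne_nil v l) ?_
  by_contra! ⟨x, hx⟩
  obtain ⟨S, hvS, hxS, hreg, hS⟩ := hP.exists_isRegularOfDegree_and_isBipartiteWith hconn hδ h hx
  have hoff : ∀ y ∉ S, y ∈ v :: l := by
    intro y hyS
    by_contra hy
    obtain ⟨T, hvT, hyT, -, hT⟩ := hP.exists_isRegularOfDegree_and_isBipartiteWith hconn hδ h hy
    rw [coe_compl] at hS hT
    have hST : S = T := mod_cast eq_of_isBipartiteWith_compl hG.preconnected hS hT hvS hvT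
    exact hyS (hST ▸ hyT)
  have hle := card_compl_le_card_of_isBipartiteWith hS hP.isChain hP.nodup hvS hoff
  have hlt : #{y ∈ S | y ∈ v :: l} < #S := card_lt_card (filter_ssubset.2 ⟨x, hxS, hx⟩)
  have heq := card_eq_of_isBipartiteWith_of_isRegularOfDegree hS hreg hδ
  omega

/-- If `G` is a `k`-connected (`k ≥ 1`) graph with `n ≥ 9` vertices, `e` edges, minimum degree
`δ`, and maximum degree `Δ`, and
`F(G) ≤ (n − k − 2)δ³ + (δ/(k+2))(2(k+2)((k+2)δ² + e²/(n − k − 2)) − e² − 2(k+2)(n − k − 2)Δ²)`,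
then `G` is traceable. -/
theorem stmt13 {V : Type*} [Fintype V] [DecidableEq V] (G : SimpleGraph V) [DecidableRel G.Adj]
    (k : ℕ) (hk : 1 ≤ k) (hconn : IsKConnected G k) (hn : 9 ≤ Fintype.card V)
    (h : forgottenIndex G ≤ ((Fintype.card V : ℝ) - k - 2) * (G.minDegree : ℝ) ^ 3
        + ((G.minDegree : ℝ) / ((k : ℝ) + 2)) *
          (2 * ((k : ℝ) + 2) * (((k : ℝ) + 2) * (G.minDegree : ℝ) ^ 2
              + (G.edgeFinset.card : ℝ) ^ 2 / ((Fintype.card V : ℝ) - k - 2))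
            - (G.edgeFinset.card : ℝ) ^ 2
            - 2 * ((k : ℝ) + 2) * ((Fintype.card V : ℝ) - k - 2) * (G.maxDegree : ℝ) ^ 2)) :
    IsTraceable G :=
  stmt13_general G k hk hconn h
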